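/- arXiv:2605.13644 — 7 statements merged into one kernel-verified Lean document; each statement's English description precedes it below -/
import Mathlib

section
/- If each strategy set X_i is nonempty and compact, and G and every f_i are continuous, then the game admits a Nash equilibrium: there exists x* ∈ X such that J_i(x*) ≥ J_i(x*[i↦t]) for every player i and every t ∈ X_i. -/
/-!
The game is a weighted potential game: a unilateral deviation of player `i` changes `J i` by
`a i` times the change of `Φ x = G x + ∑ j, (f j (x j)) / a j`, since only the `i`-th summand moves.
The potential is continuous, so it attains a maximum on the compact product of the strategy sets,
and at a maximizer no player can gain by deviating.
-/

/-- The potential identity: a unilateral deviation changes `J i` by `a i` times the change of the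
weighted potential. -/
theorem deviation_eq_mul_potential_diff {N : ℕ} (a : Fin N → ℝ) (G : (Fin N → ℝ) → ℝ)
    (f : Fin N → ℝ → ℝ) (x : Fin N → ℝ) (i : Fin N) (t : ℝ) (hi : a i ≠ 0) :
    (a i * G (Function.update x i t) + f i t) - (a i * G x + f i (x i)) =
      a i * ((G (Function.update x i t) + ∑ j, 1 / a j * f j (Function.update x i t j)) -
        (G x + ∑ j, 1 / a j * f j (x j))) := by
  have hsum : ∑ j, 1 / a j * f j (Function.update x i t j) - ∑ j, 1 / a j * f j (x j) =
      1 / a i * f i t - 1 / a i * f i (x i) := by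
    rw [← Finset.sum_sub_distrib, Finset.sum_eq_single i]
    · simp
    · intro j _ hj
      simp [Function.update_of_ne hj]
    · simp
  rw [add_sub_add_comm, add_sub_add_comm, hsum]
  field_simp

/-- If each strategy set `X i` is nonempty and compact, and `G` and every
`f i` are continuous, then the game with utilities `J i x = a i * G x + f i (x i)`
admits a Nash equilibrium. -/
theorem exists_nash_equilibrium
    (N : ℕ) (X : Fin N → Set ℝ)
    (hne : ∀ i, (X i).Nonempty) (hcomp : ∀ i, IsCompact (X i))
    (a : Fin N → ℝ) (ha : ∀ i, 0 < a i)
    (G : (Fin N → ℝ) → ℝ) (hG : Continuous G)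
    (f : Fin N → ℝ → ℝ) (hf : ∀ i, Continuous (f i))
    (J : Fin N → (Fin N → ℝ) → ℝ)
    (hJ : ∀ i x, J i x = a i * G x + f i (x i)) :
    ∃ xstar ∈ Set.univ.pi X,
      ∀ i : Fin N, ∀ t ∈ X i, J i (Function.update xstar i t) ≤ J i xstar := by
  obtain ⟨x, hx, hmax⟩ := (isCompact_univ_pi hcomp).exists_isMaxOn
    (Set.univ_pi_nonempty_iff.2 hne)
    (f := fun x => G x + ∑ j, 1 / a j * f j (x j)) (Continuous.continuousOn (by fun_prop))
  refine ⟨x, hx, fun i t ht => ?_⟩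
  have hmem : Function.update x i t ∈ Set.univ.pi X := by
    intro j _
    rcases eq_or_ne j i with rfl | hj
    · simpa using ht
    · simpa [Function.update_of_ne hj] using hx j trivial
  have hle := isMaxOn_iff.1 hmax _ hmem
  have key := deviation_eq_mul_potential_diff a G f x i t (ha i).ne'
  rw [hJ, hJ, Function.update_self, ← sub_nonpos, key]
  exact mul_nonpos_of_nonneg_of_nonpos (ha i).le (sub_nonpos.2 hle)
end

section
/- Assume the strategy sets X_i are nonempty and the set Γ⁰ of maximizers of Φ⁰ over X is nonempty, H ≥ 0 on X, and let x† ∈ Γ⁰ satisfy H(x†) ≤ H(x) for all x ∈ Γ⁰. Let λ > 0, let a_max = max_i a_i, and set ε = λ a_max H(x†). If x^λ ∈ X maximizes Φ^λ = Φ⁰ − λH over X, then x^λ is an ε-Nash equilibrium of the unregularized game: for every player i and every t ∈ X_i, J_i(x^λ) ≥ J_i(x^λ[i↦t]) − ε. -/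
/-!
The function `Φ0` is a weighted potential: a unilateral deviation of player `i` changes `J i` by
`a i` times the change of `Φ0` (`utility_sub_eq_mul_potential_sub`). Comparing `xl` with `xd` in the
regularized problem gives `Φ0 xd - Φ0 xl ≤ lam * (H xd - H xl) ≤ lam * H xd`, so `xl` is within
`lam * H xd` of the maximum of `Φ0` over `X`. Hence no deviation raises `J i` by more than
`a i * (lam * H xd) ≤ lam * amax * H xd`.
-/

/-- Weighted potential identity: in `Φ0` only the summand of player `i` depends on the deviation
`t` other than through `G`. -/
lemma utility_sub_eq_mul_potential_sub {N : ℕ} (a : Fin N → ℝ) (ha : ∀ i, 0 < a i)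
    (G : (Fin N → ℝ) → ℝ) (f : Fin N → ℝ → ℝ)
    (J : Fin N → (Fin N → ℝ) → ℝ) (Φ0 : (Fin N → ℝ) → ℝ)
    (hJ : ∀ i x, J i x = a i * G x + f i (x i))
    (hΦ0 : ∀ x, Φ0 x = G x + ∑ j, (1 / a j) * f j (x j))
    (x : Fin N → ℝ) (i : Fin N) (t : ℝ) :
    J i (Function.update x i t) - J i x = a i * (Φ0 (Function.update x i t) - Φ0 x) := by
  have hsum : ∑ j, (1 / a j) * f j (Function.update x i t j) - ∑ j, (1 / a j) * f j (x j)
      = (1 / a i) * (f i t - f i (x i)) := by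
    rw [← Finset.sum_sub_distrib, Finset.sum_eq_single i]
    · rw [Function.update_self]; ring
    · intro j _ hj
      rw [Function.update_of_ne hj, sub_self]
    · simp
  have hai : a i * ((1 / a i) * (f i t - f i (x i))) = f i t - f i (x i) := by
    have := (ha i).ne'
    field_simp
  rw [← hsum] at hai
  rw [hJ, hJ, hΦ0, hΦ0, Function.update_self]
  linear_combination -hai

/-- Let `Γ⁰` be the (nonempty) set of maximizers of the unregularized
potential `Φ⁰` over `X = X_1 × ⋯ × X_N`, let `H ≥ 0` on `X`, and let `x† ∈ Γ⁰` minimize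
`H` over `Γ⁰`. Let `λ > 0`, `a_max = max_i a_i`, and `ε = λ a_max H(x†)`. If `x^λ ∈ X`
maximizes `Φ^λ = Φ⁰ − λH` over `X`, then `x^λ` is an `ε`-Nash equilibrium of the
unregularized game: `J i (x^λ) ≥ J i (x^λ[i↦t]) − ε` for every `i` and every `t ∈ X i`. -/
theorem regularized_maximizer_is_eps_nash
    (N : ℕ) (X : Fin N → Set ℝ) (hne : ∀ i, (X i).Nonempty)
    (a : Fin N → ℝ) (ha : ∀ i, 0 < a i)
    (amax : ℝ) (hamax : IsGreatest (Set.range a) amax)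
    (G : (Fin N → ℝ) → ℝ) (f : Fin N → ℝ → ℝ)
    (J : Fin N → (Fin N → ℝ) → ℝ) (Φ0 : (Fin N → ℝ) → ℝ)
    (hJ : ∀ i x, J i x = a i * G x + f i (x i))
    (hΦ0 : ∀ x, Φ0 x = G x + ∑ j, (1 / a j) * f j (x j))
    (H : (Fin N → ℝ) → ℝ) (hH : ∀ x ∈ Set.univ.pi X, 0 ≤ H x)
    (xd : Fin N → ℝ)
    (hxdX : xd ∈ Set.univ.pi X)
    (hxdmax : ∀ x ∈ Set.univ.pi X, Φ0 x ≤ Φ0 xd)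
    (hxdmin : ∀ x, x ∈ Set.univ.pi X → (∀ y ∈ Set.univ.pi X, Φ0 y ≤ Φ0 x) → H xd ≤ H x)
    (lam : ℝ) (hlam : 0 < lam)
    (xl : Fin N → ℝ) (hxlX : xl ∈ Set.univ.pi X)
    (hxlmax : ∀ y ∈ Set.univ.pi X, Φ0 y - lam * H y ≤ Φ0 xl - lam * H xl) :
    ∀ i : Fin N, ∀ t ∈ X i,
      J i (Function.update xl i t) - lam * amax * H xd ≤ J i xl := by
  intro i t ht
  have hmem : Function.update xl i t ∈ Set.univ.pi X := by
    intro j hj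
    rcases eq_or_ne j i with rfl | hne'
    · rwa [Function.update_self]
    · rw [Function.update_of_ne hne']
      exact hxlX j hj
  have hid := utility_sub_eq_mul_potential_sub a ha G f J Φ0 hJ hΦ0 xl i t
  have hgap : Φ0 (Function.update xl i t) - Φ0 xl ≤ lam * H xd := by
    have h1 := hxdmax _ hmem
    have h2 := hxlmax xd hxdX
    have h3 := mul_nonneg hlam.le (hH xl hxlX)
    linarith
  have h4 := mul_le_mul_of_nonneg_left hgap (ha i).le
  have h5 := mul_le_mul_of_nonneg_right (hamax.2 ⟨i, rfl⟩) (mul_nonneg hlam.le (hH xd hxdX))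
  linarith
end

section
/- Suppose each X_i ⊆ ℝ is convex and the potential Φ is differentiable and concave on X = X_1 × ⋯ × X_N. Then x* ∈ X is a Nash equilibrium of the game with utilities J_i if and only if x* maximizes Φ over X; in particular, in a smooth concave potential game the set of Nash equilibria coincides with the set of maximizers of the potential. -/
/-!
Multiplying a unilateral change of `Φ` by `a i > 0` gives the unilateral change of `J i`
(`utility_deviation`), so a Nash equilibrium is a point of the product set at which `Φ` is maximal
along each coordinate. Maximizers of `Φ` have this property at once. Conversely, coordinatewise
maximality makes the derivative of `Φ` nonpositive along each admissible coordinate direction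
(`fderiv_single_nonpos`). For any `x` in the product set, `x - xstar` is a sum of such directions,
so linearity of the derivative gives `Φ'(xstar) (x - xstar) ≤ 0`, and the gradient inequality for
concave functions (`concaveOn_sub_le_fderiv`) yields `Φ x ≤ Φ xstar`. Differentiability is what
makes this last step work: coordinatewise maximality does not suffice for a nonsmooth concave `Φ`.
-/

/-- The weighted potential property: a unilateral deviation changes `J i` by `a i` times the change
in `Φ`. -/
lemma utility_deviation {N : ℕ} {a : Fin N → ℝ} (ha : ∀ i, 0 < a i)
    {G : (Fin N → ℝ) → ℝ} {f : Fin N → ℝ → ℝ}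
    {J : Fin N → (Fin N → ℝ) → ℝ} {Φ : (Fin N → ℝ) → ℝ}
    (hJ : ∀ i x, J i x = a i * G x + f i (x i))
    (hΦ : ∀ x, Φ x = G x + ∑ j, (1 / a j) * f j (x j))
    (x : Fin N → ℝ) (i : Fin N) (t : ℝ) :
    J i (Function.update x i t) - J i x = a i * (Φ (Function.update x i t) - Φ x) := by
  have hsum : ∑ j, (1 / a j) * f j (Function.update x i t j) - ∑ j, (1 / a j) * f j (x j)
      = (1 / a i) * f i t - (1 / a i) * f i (x i) := by
    rw [← Finset.sum_sub_distrib, Finset.sum_eq_single i]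
    · simp
    · intro j _ hj
      simp [hj]
    · simp
  have hai : a i * (1 / a i) = 1 := mul_one_div_cancel (ha i).ne'
  rw [hJ, hJ, hΦ, hΦ, Function.update_self]
  linear_combination -(a i) * hsum - (f i t - f i (x i)) * hai

/-- The gradient inequality for concave functions. -/
lemma concaveOn_sub_le_fderiv {E : Type*} [NormedAddCommGroup E] [NormedSpace ℝ E]
    {s : Set E} {φ : E → ℝ} (hφ : ConcaveOn ℝ s φ) {x y : E} (hx : x ∈ s) (hy : y ∈ s)
    (hd : DifferentiableAt ℝ φ x) : φ y - φ x ≤ fderiv ℝ φ x (y - x) := by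
  -- Restrict to the line through `x` and `y` and use the one-variable slope inequality.
  have hg := hφ.comp_affineMap (AffineMap.lineMap x y : ℝ →ᵃ[ℝ] E)
  have hd' : HasDerivAt (φ ∘ (AffineMap.lineMap x y : ℝ →ᵃ[ℝ] E)) (fderiv ℝ φ x (y - x)) 0 := by
    refine HasFDerivAt.comp_hasDerivAt (0 : ℝ) ?_ AffineMap.hasDerivAt_lineMap
    simpa using hd.hasFDerivAt
  have h := hg.slope_le_of_hasDerivAt (x := 0) (y := 1) (by simpa using hx) (by simpa using hy)
    one_pos hd'
  simpa [slope_def_field] using h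

/-- First-order condition in one coordinate. -/
lemma fderiv_single_nonpos {N : ℕ} {s : Set ℝ} (hs : Convex ℝ s) {φ : (Fin N → ℝ) → ℝ}
    {x : Fin N → ℝ} (hd : DifferentiableAt ℝ φ x) (i : Fin N) (hxi : x i ∈ s)
    (hmax : ∀ t ∈ s, φ (Function.update x i t) ≤ φ x) {t : ℝ} (ht : t ∈ s) :
    fderiv ℝ φ x (Pi.single i (t - x i)) ≤ 0 := by
  -- `φ` is maximal at `x` on the segment from `x` to `Function.update x i t`.
  have hseg : IsMaxOn φ (segment ℝ x (Function.update x i t)) x := by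
    rw [segment_eq_image_lineMap]
    rintro _ ⟨r, hr, rfl⟩
    have : AffineMap.lineMap x (Function.update x i t) r
        = Function.update x i (AffineMap.lineMap (x i) t r) := by
      ext j
      rcases eq_or_ne j i with rfl | hj
      · simp [AffineMap.lineMap_apply]
      · simp [AffineMap.lineMap_apply, hj]
    simp only [Set.mem_ofPred_eq, this]
    exact hmax _ (hs.lineMap_mem hxi ht hr)
  have h := hseg.localize.hasFDerivWithinAt_nonpos hd.hasFDerivAt.hasFDerivWithinAt
    (sub_mem_posTangentConeAt_of_segment_subset subset_rfl)
  convert h using 2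
  ext j
  rcases eq_or_ne j i with rfl | hj
  · simp
  · simp [hj]


/-- In a smooth concave potential game (each `X i` convex, potential `Φ`
differentiable and concave on `X = X_1 × ⋯ × X_N`), a point `x* ∈ X` is a Nash
equilibrium of the game with utilities `J i x = a i * G x + f i (x i)` if and only if
`x*` maximizes the potential `Φ` over `X`. -/
theorem nash_iff_potential_maximizer
    (N : ℕ) (X : Fin N → Set ℝ) (hconv : ∀ i, Convex ℝ (X i))
    (a : Fin N → ℝ) (ha : ∀ i, 0 < a i)
    (G : (Fin N → ℝ) → ℝ) (f : Fin N → ℝ → ℝ)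
    (J : Fin N → (Fin N → ℝ) → ℝ) (Φ : (Fin N → ℝ) → ℝ)
    (hJ : ∀ i x, J i x = a i * G x + f i (x i))
    (hΦ : ∀ x, Φ x = G x + ∑ j, (1 / a j) * f j (x j))
    (hdiff : Differentiable ℝ Φ)
    (hconc : ConcaveOn ℝ (Set.univ.pi X) Φ)
    (xstar : Fin N → ℝ) (hxstar : xstar ∈ Set.univ.pi X) :
    (∀ i : Fin N, ∀ t ∈ X i, J i (Function.update xstar i t) ≤ J i xstar) ↔
      (∀ x ∈ Set.univ.pi X, Φ x ≤ Φ xstar) := by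
  have hcoord : (∀ i : Fin N, ∀ t ∈ X i, J i (Function.update xstar i t) ≤ J i xstar) ↔
      ∀ i : Fin N, ∀ t ∈ X i, Φ (Function.update xstar i t) ≤ Φ xstar := by
    refine forall₃_congr fun i t _ => ?_
    rw [← sub_nonpos, utility_deviation ha hJ hΦ, ← sub_nonpos (a := Φ _)]
    exact ⟨fun h => nonpos_of_mul_nonpos_right h (ha i),
      fun h => mul_nonpos_of_nonneg_of_nonpos (ha i).le h⟩
  rw [hcoord]
  constructor
  · intro h x hx
    have hsum : fderiv ℝ Φ xstar (x - xstar) ≤ 0 := by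
      rw [← Finset.univ_sum_single (x - xstar), map_sum]
      exact Finset.sum_nonpos fun i _ => fderiv_single_nonpos (hconv i) (hdiff xstar) i
        (hxstar i trivial) (h i) (hx i trivial)
    linarith [concaveOn_sub_le_fderiv hconc hxstar hx (hdiff xstar)]
  · intro h i t ht
    refine h _ fun j _ => ?_
    rcases eq_or_ne j i with rfl | hj
    · simpa using ht
    · simpa [hj] using hxstar j trivial
end

section
/- Let each X_i ⊆ ℝ be nonempty, convex and compact, let G and every f_i be continuous, let the potential Φ be differentiable and strictly concave on X (so Φ has a unique maximizer x* over X), and let (x(k))_{k≥0} be generated by iterative best response, where x_i(k+1) maximizes player i's utility over X_i given x_1(k+1),…,x_{i−1}(k+1) and x_{i+1}(k),…,x_N(k). Then x(k) converges to x*, the unique Nash equilibrium of the game. -/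
/-!
For each player `i`, changing only coordinate `i` changes `J i` by `a i` times the change of `Φ`,
so best responses are exactly coordinatewise maximizations of `Φ`. Two facts carry the theorem.

* A point of the box which maximizes `Φ` in each coordinate separately maximizes `Φ`
  (`le_of_coordinatewise_max`): differentiability splits the directional derivative towards any
  other point into coordinate contributions, each nonpositive, and concavity does the rest. Hence
  the Nash equilibria are the maximizers of `Φ`, and strict concavity leaves only one.
* Along the partial sweeps `sweep (x k) (x (k + 1)) m` the potential is nondecreasing and bounded,
  so all these values have the same limit `L`. Along any ultrafilter finer than `atTop`, let
  `x k → y` and `x (k + 1) → z`. Then every `sweep y z m` has potential `L`, and `z i` is a best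
  response to the `i`-th partial sweep with the same value as `y i`. Strict concavity in
  coordinate `i` forces `y i = z i`, so `y` is a Nash equilibrium and `y = xstar`.
-/

/-- The profile in the middle of a round from `p` to `q`: the first `m` players have already moved
to their coordinates of `q`, the others still play `p`. -/
def sweep {N : ℕ} (p q : Fin N → ℝ) (m : ℕ) : Fin N → ℝ :=
  fun j => if j.val < m then q j else p j

lemma sweep_zero {N : ℕ} (p q : Fin N → ℝ) : sweep p q 0 = p := by
  funext j; simp [sweep]

lemma sweep_full {N : ℕ} (p q : Fin N → ℝ) : sweep p q N = q := by
  funext j; simp [sweep]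

lemma sweep_self {N : ℕ} (p : Fin N → ℝ) (m : ℕ) : sweep p p m = p := by
  funext j; simp [sweep]

lemma update_sweep_new {N : ℕ} (p q : Fin N → ℝ) (i : Fin N) :
    Function.update (sweep p q i.val) i (q i) = sweep p q (i.val + 1) := by
  funext j
  rcases eq_or_ne j i with rfl | h
  · simp [sweep]
  · have h' : j.val ≠ i.val := fun e => h (Fin.ext e)
    have : j.val < i.val + 1 ↔ j.val < i.val := by omega
    simp [sweep, h, this]

lemma update_sweep_old {N : ℕ} (p q : Fin N → ℝ) (i : Fin N) :
    Function.update (sweep p q i.val) i (p i) = sweep p q i.val := by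
  rw [Function.update_eq_self_iff]
  simp [sweep]

lemma sweep_mem {N : ℕ} {X : Fin N → Set ℝ} {p q : Fin N → ℝ} (hp : p ∈ Set.univ.pi X)
    (hq : q ∈ Set.univ.pi X) (m : ℕ) : sweep p q m ∈ Set.univ.pi X := by
  intro j hj
  simp only [sweep]
  split_ifs
  · exact hq j hj
  · exact hp j hj

lemma update_mem_box {N : ℕ} {X : Fin N → Set ℝ} {p : Fin N → ℝ} (hp : p ∈ Set.univ.pi X)
    (i : Fin N) {t : ℝ} (ht : t ∈ X i) : Function.update p i t ∈ Set.univ.pi X := by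
  intro j hj
  rcases eq_or_ne j i with rfl | h
  · simpa using ht
  · simpa [h] using hp j hj

lemma tendsto_sweep {N : ℕ} {α : Type*} {l : Filter α} {p q : α → Fin N → ℝ} {y z : Fin N → ℝ}
    (hp : Filter.Tendsto p l (nhds y)) (hq : Filter.Tendsto q l (nhds z)) (m : ℕ) :
    Filter.Tendsto (fun k => sweep (p k) (q k) m) l (nhds (sweep y z m)) := by
  rw [tendsto_pi_nhds] at *
  intro j
  simp only [sweep]
  split_ifs
  · exact hq j
  · exact hp j

/-- The weighted potential property: comparing two unilateral deviations of player `i` by `J i` or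
by `Φ` gives the same answer. -/
lemma utility_le_iff_potential_le {N : ℕ} {a : Fin N → ℝ} (ha : ∀ i, 0 < a i)
    {G : (Fin N → ℝ) → ℝ} {f : Fin N → ℝ → ℝ}
    {J : Fin N → (Fin N → ℝ) → ℝ} {Φ : (Fin N → ℝ) → ℝ}
    (hJ : ∀ i x, J i x = a i * G x + f i (x i))
    (hΦ : ∀ x, Φ x = G x + ∑ j, (1 / a j) * f j (x j))
    (w : Fin N → ℝ) (i : Fin N) (s t : ℝ) :
    J i (Function.update w i t) ≤ J i (Function.update w i s) ↔
      Φ (Function.update w i t) ≤ Φ (Function.update w i s) := by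
  have hsum : ∑ j, (1 / a j) * f j (Function.update w i s j)
      - ∑ j, (1 / a j) * f j (Function.update w i t j) = (1 / a i) * (f i s - f i t) := by
    rw [← Finset.sum_sub_distrib, Finset.sum_eq_single i]
    · simp; ring
    · intro j _ hj
      simp [hj]
    · simp
  have hdiff : J i (Function.update w i s) - J i (Function.update w i t)
      = a i * (Φ (Function.update w i s) - Φ (Function.update w i t)) := by
    have e : Φ (Function.update w i s) - Φ (Function.update w i t)
        = G (Function.update w i s) - G (Function.update w i t)
          + (1 / a i) * (f i s - f i t) := by
      rw [hΦ, hΦ, ← hsum]; ring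
    rw [e, hJ, hJ]
    have := (ha i).ne'
    simp only [Function.update_self]
    field_simp
    ring
  rw [← sub_nonneg, hdiff, mul_nonneg_iff_of_pos_left (ha i), sub_nonneg]

/-- Differentiability is essential here: a concave function with a kink can be maximal in every
coordinate direction without being maximal. -/
lemma le_of_coordinatewise_max {N : ℕ} {X : Fin N → Set ℝ} (hconv : ∀ i, Convex ℝ (X i))
    {Φ : (Fin N → ℝ) → ℝ} (hdiff : Differentiable ℝ Φ)
    (hconc : ConcaveOn ℝ (Set.univ.pi X) Φ) {y : Fin N → ℝ} (hy : y ∈ Set.univ.pi X)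
    (hmax : ∀ i, ∀ t ∈ X i, Φ (Function.update y i t) ≤ Φ y)
    {v : Fin N → ℝ} (hv : v ∈ Set.univ.pi X) : Φ v ≤ Φ y := by
  have hline : ∀ d : Fin N → ℝ,
      HasDerivAt (fun s : ℝ => Φ (y + s • d)) (fderiv ℝ Φ y d) 0 := by
    intro d
    have h := (hdiff (y + (0 : ℝ) • d)).hasFDerivAt.comp_hasDerivAt (0 : ℝ)
      (((hasDerivAt_id (0 : ℝ)).smul_const d).const_add y)
    simp only [id, zero_smul, add_zero, one_smul] at h
    exact h
  -- A one-sided bound on the difference quotients at `0⁺` passes to the derivative.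
  have hslope : ∀ d : Fin N → ℝ, Filter.Tendsto (fun s : ℝ => s⁻¹ * (Φ (y + s • d) - Φ y))
      (nhdsWithin 0 (Set.Ioi 0)) (nhds (fderiv ℝ Φ y d)) := by
    intro d
    have h := (hline d).tendsto_slope_zero_right
    simpa using h
  have hunit : ∀ᶠ s : ℝ in nhdsWithin 0 (Set.Ioi 0), s ∈ Set.Ioo (0 : ℝ) 1 :=
    Ioo_mem_nhdsGT one_pos
  have hcoord : ∀ i, fderiv ℝ Φ y (Pi.single i (v i - y i)) ≤ 0 := by
    intro i
    refine le_of_tendsto (hslope _) ?_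
    filter_upwards [hunit] with s hs
    have hupd : y + s • Pi.single i (v i - y i)
        = Function.update y i ((1 - s) * y i + s * v i) := by
      funext j
      rcases eq_or_ne j i with rfl | h
      · simp; ring
      · simp [h]
    have hmem : (1 - s) * y i + s * v i ∈ X i :=
      hconv i (hy i trivial) (hv i trivial) (by linarith [hs.2]) hs.1.le (by ring)
    rw [hupd]
    exact mul_nonpos_of_nonneg_of_nonpos (inv_nonneg.2 hs.1.le)
      (sub_nonpos.2 (hmax i _ hmem))
  have hsum : fderiv ℝ Φ y (v - y) ≤ 0 := by
    have e : v - y = ∑ i, Pi.single i (v i - y i) := by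
      rw [← Finset.univ_sum_single (v - y)]; rfl
    rw [e, map_sum]
    exact Finset.sum_nonpos fun i _ => hcoord i
  have hge : Φ v - Φ y ≤ fderiv ℝ Φ y (v - y) := by
    refine ge_of_tendsto (hslope _) ?_
    filter_upwards [hunit] with s hs
    have h := hconc.2 hy hv (by linarith [hs.2] : (0 : ℝ) ≤ 1 - s) hs.1.le (by ring)
    have e : (1 - s) • y + s • v = y + s • (v - y) := by
      rw [sub_smul, one_smul, smul_sub]; abel
    rw [e, smul_eq_mul, smul_eq_mul] at h
    rw [← div_eq_inv_mul, le_div_iff₀ hs.1]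
    linarith
  linarith

/-- A strictly concave function on a set has at most one maximizer; this form only needs both
points to dominate their midpoint. -/
lemma eq_of_midpoint_le {E : Type*} [AddCommGroup E] [Module ℝ E] {s : Set E} {Φ : E → ℝ}
    (h : StrictConcaveOn ℝ s Φ) {p q : E} (hp : p ∈ s) (hq : q ∈ s)
    (hp' : Φ ((1 / 2 : ℝ) • p + (1 / 2 : ℝ) • q) ≤ Φ p)
    (hq' : Φ ((1 / 2 : ℝ) • p + (1 / 2 : ℝ) • q) ≤ Φ q) : p = q := by
  by_contra hne
  have := h.2 hp hq hne (by norm_num : (0 : ℝ) < 1 / 2) (by norm_num : (0 : ℝ) < 1 / 2)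
    (by norm_num)
  simp only [smul_eq_mul] at this
  linarith


/-- With each `X i` nonempty, convex and compact, `G` and every `f i`
continuous, and the potential `Φ` differentiable and strictly concave on `X` (so `Φ` has
a unique maximizer `x*` over `X`), the iterative best response sequence `x(k)` converges
to `x*`, the unique Nash equilibrium of the game. -/
theorem iterative_best_response_converges_to_unique_nash
    (N : ℕ) (X : Fin N → Set ℝ)
    (hne : ∀ i, (X i).Nonempty) (hconv : ∀ i, Convex ℝ (X i))
    (hcomp : ∀ i, IsCompact (X i))
    (a : Fin N → ℝ) (ha : ∀ i, 0 < a i)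
    (G : (Fin N → ℝ) → ℝ) (hG : Continuous G)
    (f : Fin N → ℝ → ℝ) (hf : ∀ i, Continuous (f i))
    (J : Fin N → (Fin N → ℝ) → ℝ) (Φ : (Fin N → ℝ) → ℝ)
    (hJ : ∀ i x, J i x = a i * G x + f i (x i))
    (hΦ : ∀ x, Φ x = G x + ∑ j, (1 / a j) * f j (x j))
    (hdiff : Differentiable ℝ Φ)
    (hstrict : StrictConcaveOn ℝ (Set.univ.pi X) Φ)
    (xstar : Fin N → ℝ) (hxstarX : xstar ∈ Set.univ.pi X)
    (hxstarmax : ∀ y ∈ Set.univ.pi X, Φ y ≤ Φ xstar)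
    (x : ℕ → Fin N → ℝ)
    (h0 : x 0 ∈ Set.univ.pi X)
    (hmem : ∀ (k : ℕ) (i : Fin N), x (k + 1) i ∈ X i)
    (hbr : ∀ (k : ℕ) (i : Fin N), ∀ t ∈ X i,
      J i (Function.update (fun j => if j < i then x (k + 1) j else x k j) i t)
        ≤ J i (Function.update (fun j => if j < i then x (k + 1) j else x k j) i
            (x (k + 1) i))) :
    Filter.Tendsto x Filter.atTop (nhds xstar) ∧
    (∀ i : Fin N, ∀ t ∈ X i, J i (Function.update xstar i t) ≤ J i xstar) ∧
    (∀ y ∈ Set.univ.pi X,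
      (∀ i : Fin N, ∀ t ∈ X i, J i (Function.update y i t) ≤ J i y) → y = xstar) := by
  have hkey := utility_le_iff_potential_le ha hJ hΦ
  have hconvK : Convex ℝ (Set.univ.pi X) := hstrict.1
  have hxK : ∀ k, x k ∈ Set.univ.pi X := by
    intro k
    cases k with
    | zero => exact h0
    | succ k => exact fun i _ => hmem k i
  have huniq : ∀ y ∈ Set.univ.pi X, (∀ i, ∀ t ∈ X i, Φ (Function.update y i t) ≤ Φ y) →
      y = xstar := by
    intro y hy hmax
    have hle : Φ xstar ≤ Φ y :=
      le_of_coordinatewise_max hconv hdiff hstrict.concaveOn hy hmax hxstarX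
    have hmid := hxstarmax _
      (hconvK hy hxstarX (by norm_num : (0 : ℝ) ≤ 1 / 2) (by norm_num : (0 : ℝ) ≤ 1 / 2)
        (by norm_num))
    exact eq_of_midpoint_le hstrict hy hxstarX (hmid.trans hle) hmid
  have hnash : ∀ (y : Fin N → ℝ) (i : Fin N) (t : ℝ),
      J i (Function.update y i t) ≤ J i y ↔ Φ (Function.update y i t) ≤ Φ y := by
    intro y i t
    simpa using hkey y i (y i) t
  refine ⟨?_, ?_, ?_⟩
  · have hbrΦ : ∀ k (i : Fin N), ∀ t ∈ X i,
        Φ (Function.update (sweep (x k) (x (k + 1)) i.val) i t)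
          ≤ Φ (sweep (x k) (x (k + 1)) (i.val + 1)) := by
      intro k i t ht
      rw [← update_sweep_new, ← hkey]
      exact hbr k i t ht
    have hstep : ∀ k m, Φ (sweep (x k) (x (k + 1)) m) ≤ Φ (sweep (x k) (x (k + 1)) (m + 1)) := by
      intro k m
      by_cases hm : m < N
      · have h := hbrΦ k ⟨m, hm⟩ (x k ⟨m, hm⟩) (hxK k _ trivial)
        rwa [update_sweep_old] at h
      · -- Past the last player both sides are the completed sweep.
        have e : sweep (x k) (x (k + 1)) m = sweep (x k) (x (k + 1)) (m + 1) := by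
          funext j
          have h1 : j.val < m := by omega
          have h2 : j.val < m + 1 := by omega
          simp [sweep, h1, h2]
        rw [e]
    have hmonoS : ∀ k, Monotone fun m => Φ (sweep (x k) (x (k + 1)) m) :=
      fun k => monotone_nat_of_le_succ (hstep k)
    have hlo : ∀ k m, Φ (x k) ≤ Φ (sweep (x k) (x (k + 1)) m) := by
      intro k m
      have h := hmonoS k (Nat.zero_le m)
      simpa only [sweep_zero] using h
    have hhi : ∀ k m, m ≤ N → Φ (sweep (x k) (x (k + 1)) m) ≤ Φ (x (k + 1)) := by
      intro k m hm
      have h := hmonoS k hm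
      simpa only [sweep_full] using h
    have hmono : Monotone fun k => Φ (x k) :=
      monotone_nat_of_le_succ fun k => (hlo k N).trans (hhi k N le_rfl)
    obtain ⟨L, hL⟩ : ∃ L, Filter.Tendsto (fun k => Φ (x k)) Filter.atTop (nhds L) :=
      ⟨_, tendsto_atTop_ciSup hmono
        ⟨Φ xstar, by rintro _ ⟨k, rfl⟩; exact hxstarmax _ (hxK k)⟩⟩
    have hLS : ∀ m, m ≤ N →
        Filter.Tendsto (fun k => Φ (sweep (x k) (x (k + 1)) m)) Filter.atTop (nhds L) :=
      fun m hm => tendsto_of_tendsto_of_tendsto_of_le_of_le hL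
        (hL.comp (Filter.tendsto_add_atTop_nat 1)) (fun k => hlo k m) (fun k => hhi k m hm)
    have hK : IsCompact (Set.univ.pi X) := isCompact_univ_pi hcomp
    rw [Filter.tendsto_iff_ultrafilter]
    intro U hU
    have hlim : ∀ u : ℕ → Fin N → ℝ, (∀ k, u k ∈ Set.univ.pi X) →
        ∃ y ∈ Set.univ.pi X, Filter.Tendsto u U (nhds y) := by
      intro u hu
      exact hK.ultrafilter_le_nhds (U.map u)
        (Filter.le_principal_iff.2 (Filter.mem_map.2 (Filter.Eventually.of_forall hu)))
    obtain ⟨y, hyK, hy⟩ := hlim x hxK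
    obtain ⟨z, hzK, hz⟩ := hlim (fun k => x (k + 1)) fun k => hxK (k + 1)
    have hΦlim : ∀ m, Filter.Tendsto (fun k => Φ (sweep (x k) (x (k + 1)) m)) U
        (nhds (Φ (sweep y z m))) :=
      fun m => (hdiff.continuous.tendsto _).comp (tendsto_sweep hy hz m)
    have hval : ∀ m, m ≤ N → Φ (sweep y z m) = L :=
      fun m hm => tendsto_nhds_unique (hΦlim m) ((hLS m hm).mono_left hU)
    have hbrlim : ∀ i : Fin N, ∀ t ∈ X i,
        Φ (Function.update (sweep y z i.val) i t) ≤ Φ (sweep y z (i.val + 1)) := by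
      intro i t ht
      refine le_of_tendsto_of_tendsto' ((hdiff.continuous.tendsto _).comp
        ((tendsto_sweep hy hz i.val).update i tendsto_const_nhds)) (hΦlim (i.val + 1))
        fun k => hbrΦ k i t ht
    have hyz : y = z := by
      funext i
      have hmid : Φ ((1 / 2 : ℝ) • sweep y z i.val + (1 / 2 : ℝ) • sweep y z (i.val + 1)) ≤ L := by
        -- The two sweeps differ in coordinate `i` only, hence so does their midpoint.
        have e : (1 / 2 : ℝ) • sweep y z i.val + (1 / 2 : ℝ) • sweep y z (i.val + 1)
            = Function.update (sweep y z i.val) i ((1 / 2) * y i + (1 / 2) * z i) := by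
          rw [← update_sweep_new]
          funext j
          rcases eq_or_ne j i with rfl | h
          · simp [sweep]
          · simp [h]; ring
        rw [e, ← hval (i.val + 1) i.isLt]
        exact hbrlim i _ (hconv i (hyK i trivial) (hzK i trivial) (by norm_num) (by norm_num)
          (by norm_num))
      have h := eq_of_midpoint_le hstrict (sweep_mem hyK hzK i.val)
        (sweep_mem hyK hzK (i.val + 1)) (hmid.trans (hval _ i.isLt.le).ge)
        (hmid.trans (hval _ i.isLt).ge)
      simpa [sweep] using congrFun h i
    subst hyz
    have hyx : y = xstar := huniq y hyK fun i t ht => by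
      simpa only [sweep_self] using hbrlim i t ht
    exact hyx ▸ hy
  · intro i t ht
    exact (hnash xstar i t).2 (hxstarmax _ (update_mem_box hxstarX i ht))
  · intro y hy h
    exact huniq y hy fun i t ht => (hnash y i t).1 (h i t ht)
end

section
/- Let X ⊆ ℝ^N be nonempty, convex and compact, let Φ : ℝ^N → ℝ be continuous and concave on X, let λ > 0, and let the IMM (proximal) iterates be defined by x(n+1) = argmax_{x∈X} (Φ(x) − λ‖x − x(n)‖²) starting from x(0) ∈ X. Then for every maximizer x* of Φ over X and every n ≥ 1, Φ(x(n)) ≥ Φ(x*) − λ‖x(0) − x*‖²/(2n). -/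
/-!
With step `t = 1 / (2λ)`, this is the sharp `‖x₀ - x⋆‖² / (4tn)` bound for the proximal point
method, a factor two better than what the usual telescoping argument gives.

Put `F k = (Φ(x⋆) - Φ(x k)) / (2λ)` and `g k = x (k-1) - x k`. Concavity and the maximality of `x k`
give `F k - G(y) ≤ ⟪g k, x k - y⟫` for `y ∈ X`, with `G(y)` the scaled gap at `y`
(`prox_optimality`); only `y = x (k-1)` and `y = x⋆` are needed. The inequalities for `x⋆` are added
with weights `μ k = 2n / ((2n+1-k)(2n-k))`, and those for `x (k-1)` with weights
`M (k-1) = (k-1) / (2n+1-k)`. Since `M k = μ 1 + ⋯ + μ k`, the intermediate gaps cancel, and since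
`M n = 1` what remains bounds `F n`. With `p = ∑ μ k • g k`, the right-hand side is
`⟪p, x₀ - x⋆⟫ - n ‖p‖²` plus a quadratic form in the `g k` whose row sums vanish and whose cross
terms have nonnegative coefficients, hence a nonpositive one. Finally
`⟪p, d⟫ - n ‖p‖² ≤ ‖d‖² / (4n)`. The partial sums of this computation form the invariant
`prox_invariant`.
-/

/-- The variational inequality at the maximizer `b` of the proximal surrogate centred at `a`,
obtained by testing maximality on the segment from `b` to `y` and letting the test point tend
to `b`. -/
lemma prox_optimality {E : Type*} [NormedAddCommGroup E] [InnerProductSpace ℝ E]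
    {X : Set E} {Φ : E → ℝ} (hconc : ConcaveOn ℝ X Φ) {lam : ℝ} {a b y : E}
    (hb : b ∈ X) (hmax : ∀ z ∈ X, Φ z - lam * ‖z - a‖ ^ 2 ≤ Φ b - lam * ‖b - a‖ ^ 2)
    (hy : y ∈ X) :
    Φ y - Φ b ≤ 2 * lam * inner ℝ (a - b) (b - y) := by
  have key : ∀ t : ℝ, 0 < t → t ≤ 1 →
      Φ y - Φ b ≤ 2 * lam * inner ℝ (a - b) (b - y) + t * (lam * ‖b - y‖ ^ 2) := by
    intro t ht ht1
    have hz := hconc.1 hb hy (sub_nonneg.2 ht1) ht.le (by ring)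
    have hΦ := hconc.2 hb hy (sub_nonneg.2 ht1) ht.le (by ring)
    have hm := hmax _ hz
    have hn : ‖(1 - t) • b + t • y - a‖ ^ 2
        = ‖b - a‖ ^ 2 + 2 * t * inner ℝ (a - b) (b - y) + t ^ 2 * ‖b - y‖ ^ 2 := by
      have e : (1 - t) • b + t • y - a = -((a - b) + t • (b - y)) := by module
      rw [e, norm_neg, norm_add_sq_real, inner_smul_right, norm_smul, mul_pow,
        Real.norm_eq_abs, sq_abs, norm_sub_rev a b]
      ring
    rw [hn] at hm
    simp only [smul_eq_mul] at hΦ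
    refine le_of_mul_le_mul_left ?_ ht
    linarith
  have hlim : Filter.Tendsto
      (fun t : ℝ => 2 * lam * inner ℝ (a - b) (b - y) + t * (lam * ‖b - y‖ ^ 2))
      (nhdsWithin 0 (Set.Ioi 0)) (nhds (2 * lam * inner ℝ (a - b) (b - y))) := by
    refine Filter.Tendsto.mono_left ?_ nhdsWithin_le_nhds
    refine Continuous.tendsto' (by fun_prop) _ _ (by simp)
  refine ge_of_tendsto hlim ?_
  filter_upwards [Ioc_mem_nhdsGT (zero_lt_one' ℝ)] with t ht using key t ht.1 ht.2

/-- The weighted sum of the first `k` pairs of inequalities. Here `p` stands for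
`∑ i ≤ k, μ i • g i` and `T` for `∑ i ≤ k, (2 n μ i - 1) ‖g i‖²`. The second clause is
Cauchy-Schwarz and AM-GM applied to `2 n p - (x 0 - x k) = ∑ i ≤ k, (2 n μ i - 1) • g i`, whose
coefficients are nonnegative with sum `2 n M k - k`. -/
lemma prox_invariant {E : Type*} [NormedAddCommGroup E] [InnerProductSpace ℝ E]
    (x : ℕ → E) (xs : E) (F : ℕ → ℝ)
    (h1 : ∀ k, F (k + 1) ≤ F k - ‖x k - x (k + 1)‖ ^ 2)
    (h2 : ∀ k, F (k + 1) ≤ inner ℝ (x k - x (k + 1)) (x (k + 1) - xs))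
    (n : ℕ) (k : ℕ) (hk : k ≤ n) (hn : 1 ≤ n) :
    ∃ (p : E) (T : ℝ),
      (k / (2 * n - k) : ℝ) * F k ≤ inner ℝ p (x 0 - xs) - n * ‖p‖ ^ 2
        + 1 / 2 * ((k / (2 * n - k) : ℝ) - 1) * T ∧
      ∀ g : E, 2 * n * inner ℝ p g - inner ℝ g (x 0 - x k)
        ≤ 1 / 2 * ((2 * n * (k / (2 * n - k)) - k : ℝ) * ‖g‖ ^ 2 + T) := by
  induction k with
  | zero => exact ⟨0, 0, by simp, by simp⟩
  | succ k ih =>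
    obtain ⟨p, T, hp, hT⟩ := ih (by omega)
    have hkn : (k : ℝ) + 1 ≤ n := by exact_mod_cast hk
    have hk0 : (0 : ℝ) ≤ k := by positivity
    have ha : (0 : ℝ) < 2 * n - k := by linarith
    have ha' : (0 : ℝ) < 2 * n - (k + 1) := by linarith
    push_cast
    set g := x k - x (k + 1) with hg
    obtain ⟨M, hM⟩ : ∃ M : ℝ, M = k / (2 * n - k) := ⟨_, rfl⟩
    obtain ⟨μ, hμ⟩ : ∃ μ : ℝ, μ = 2 * n / ((2 * n - k) * (2 * n - (k + 1))) := ⟨_, rfl⟩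
    have hM' : ((k : ℝ) + 1) / (2 * n - (k + 1)) = M + μ := by
      rw [hM, hμ]; field_simp; ring
    have hM0 : 0 ≤ M := by rw [hM]; positivity
    have hμ0 : 0 ≤ μ := by rw [hμ]; positivity
    have hid : (2 * n - k) * μ = M + μ + 1 := by
      rw [← hM', hμ]; field_simp; ring
    have hμ1 : 1 ≤ 2 * n * μ := by
      rw [hμ, ← mul_div_assoc, le_div_iff₀ (by positivity)]
      nlinarith
    rw [hM']
    rw [← hM] at hp hT
    refine ⟨p + μ • g, T + (2 * n * μ - 1) * ‖g‖ ^ 2, ?_, fun h => ?_⟩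
    · have e2 : inner ℝ g (x (k + 1) - xs)
          = inner ℝ g (x 0 - xs) - inner ℝ g (x 0 - x k) - ‖g‖ ^ 2 := by
        rw [← real_inner_self_eq_norm_sq, ← inner_sub_right, ← inner_sub_right]
        congr 1
        rw [hg]; abel
      have i1 := mul_le_mul_of_nonneg_left (h1 k) hM0
      have i2 := mul_le_mul_of_nonneg_left (h2 k) hμ0
      have i3 := mul_le_mul_of_nonneg_left (hT g) hμ0
      rw [← hg] at i1 i2
      rw [e2] at i2
      rw [norm_add_sq_real, inner_add_left, real_inner_smul_left, real_inner_smul_right,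
        norm_smul, mul_pow, Real.norm_eq_abs, sq_abs]
      have i4 : (1 / 2 * μ * (2 * n * M - k) + n * μ ^ 2 - (M + μ)) * ‖g‖ ^ 2
          = 1 / 2 * (M + μ - 1) * (2 * n * μ - 1) * ‖g‖ ^ 2 := by
        congr 1
        linear_combination (1 / 2) * hid
      linarith
    · have e : inner ℝ h (x 0 - x (k + 1)) = inner ℝ h (x 0 - x k) + inner ℝ g h := by
        rw [real_inner_comm h g, ← inner_add_right]
        congr 1
        rw [hg]; abel
      have i1 : inner ℝ g h ≤ 1 / 2 * (‖g‖ ^ 2 + ‖h‖ ^ 2) := by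
        have := norm_sub_sq_real g h
        nlinarith [sq_nonneg ‖g - h‖]
      have i2 := mul_le_mul_of_nonneg_left i1 (sub_nonneg.2 hμ1)
      rw [e, inner_add_left, real_inner_smul_left]
      linarith [hT h]

lemma prox_rate {E : Type*} [NormedAddCommGroup E] [InnerProductSpace ℝ E]
    (x : ℕ → E) (xs : E) (F : ℕ → ℝ)
    (h1 : ∀ k, F (k + 1) ≤ F k - ‖x k - x (k + 1)‖ ^ 2)
    (h2 : ∀ k, F (k + 1) ≤ inner ℝ (x k - x (k + 1)) (x (k + 1) - xs))
    (n : ℕ) (hn : 1 ≤ n) :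
    F n ≤ ‖x 0 - xs‖ ^ 2 / (4 * n) := by
  obtain ⟨p, T, hp, -⟩ := prox_invariant x xs F h1 h2 n n le_rfl hn
  have hn0 : (0 : ℝ) < n := by exact_mod_cast hn
  have e : (n : ℝ) / (2 * n - n) = 1 := by
    rw [div_eq_one_iff_eq (by linarith)]; ring
  rw [e] at hp
  -- Completing the square in `⟪p, d⟫ - n ‖p‖²`.
  have hs := norm_sub_sq_real ((2 * n : ℝ) • p) (x 0 - xs)
  rw [real_inner_smul_left, norm_smul, mul_pow, Real.norm_eq_abs, sq_abs] at hs
  rw [le_div_iff₀ (by positivity)]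
  nlinarith [sq_nonneg ‖(2 * n : ℝ) • p - (x 0 - xs)‖]


/-- For `X ⊆ ℝ^N` nonempty, convex and compact, `Φ` continuous and concave
on `X`, `λ > 0`, and IMM (proximal) iterates
`x(n+1) = argmax_{y∈X} (Φ(y) − λ‖y − x(n)‖²)` (Euclidean norm, written via sums of
squares) starting from `x(0) ∈ X`: for every maximizer `x*` of `Φ` over `X` and every
`n ≥ 1`, `Φ(x(n)) ≥ Φ(x*) − λ‖x(0) − x*‖²/(2n)`. -/
theorem imm_rate_bound
    (N : ℕ) (X : Set (Fin N → ℝ))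
    (hne : X.Nonempty) (hconv : Convex ℝ X) (hcomp : IsCompact X)
    (Φ : (Fin N → ℝ) → ℝ)
    (hcont : ContinuousOn Φ X) (hconc : ConcaveOn ℝ X Φ)
    (lam : ℝ) (hlam : 0 < lam)
    (x : ℕ → Fin N → ℝ)
    (h0 : x 0 ∈ X)
    (hiter : ∀ n : ℕ, x (n + 1) ∈ X ∧ ∀ y ∈ X,
      Φ y - lam * ∑ j, (y j - x n j) ^ 2
        ≤ Φ (x (n + 1)) - lam * ∑ j, (x (n + 1) j - x n j) ^ 2) :
    ∀ xstar ∈ X, (∀ y ∈ X, Φ y ≤ Φ xstar) →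
      ∀ n : ℕ, 1 ≤ n →
        Φ xstar - lam * (∑ j, (x 0 j - xstar j) ^ 2) / (2 * (n : ℝ)) ≤ Φ (x n) := by
  intro xs hxs hopt n hn
  -- `Fin N → ℝ` carries the sup norm, so the argument is run in `EuclideanSpace`.
  let toE : (Fin N → ℝ) → EuclideanSpace ℝ (Fin N) := WithLp.toLp 2
  have hnorm : ∀ u v : Fin N → ℝ, ∑ j, (u j - v j) ^ 2 = ‖toE u - toE v‖ ^ 2 := by
    intro u v
    rw [EuclideanSpace.real_norm_sq_eq]
    rfl
  have hconcE : ConcaveOn ℝ {z : EuclideanSpace ℝ (Fin N) | z.ofLp ∈ X} (fun z => Φ z.ofLp) :=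
    hconc.comp_linearMap (WithLp.linearEquiv 2 ℝ (Fin N → ℝ)).toLinearMap
  have hX : ∀ k, x k ∈ X := by
    rintro (_ | k)
    exacts [h0, (hiter k).1]
  have hopt' : ∀ k, ∀ y ∈ X, Φ y - Φ (x (k + 1))
      ≤ 2 * lam * inner ℝ (toE (x k) - toE (x (k + 1))) (toE (x (k + 1)) - toE y) := by
    intro k y hy
    refine prox_optimality (y := toE y) hconcE (hX (k + 1)) (fun z hz => ?_) hy
    have := (hiter k).2 z.ofLp hz
    rwa [hnorm, hnorm] at this
  have hmain := prox_rate (fun k => toE (x k)) (toE xs)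
    (fun k => (Φ xs - Φ (x k)) / (2 * lam)) (fun k => ?_) (fun k => ?_) n hn
  · have hn0 : (0 : ℝ) < n := by exact_mod_cast hn
    rw [hnorm]
    rw [div_le_iff₀ (by positivity)] at hmain
    have e : ‖toE (x 0) - toE xs‖ ^ 2 / (4 * n) * (2 * lam)
        = lam * ‖toE (x 0) - toE xs‖ ^ 2 / (2 * n) := by
      field_simp; norm_num
    linarith
  · have h := hopt' k (x k) (hX k)
    rw [← neg_sub (toE (x k)) (toE (x (k + 1))), inner_neg_right,
      real_inner_self_eq_norm_sq] at h
    rw [div_le_iff₀ (by positivity), sub_mul, div_mul_cancel₀ _ (by positivity)]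
    linarith
  · have h := hopt' k xs hxs
    rw [div_le_iff₀ (by positivity)]
    linarith
end

section
/- Let X ⊆ ℝ^N be nonempty, convex and compact, let Φ : ℝ^N → ℝ be continuous and concave on X, let λ > 0, and let the IMM iterates be x(n+1) = argmax_{x∈X} (Φ(x) − λ‖x − x(n)‖²) from x(0) ∈ X. Then the sequence (x(n)) converges to some point of Γ = argmax_{x∈X} Φ(x). -/
/-!
The iteration is the proximal point method for a concave function on a compact convex set.
Write `D y z = ∑ j, (y j - z j) ^ 2`. Comparing `x (n + 1)` with points of the segment from
`x (n + 1)` to `y`, and letting these tend to `x (n + 1)`, gives the three-point inequality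
(`imm_three_point`)
`Φ y - Φ (x (n + 1)) ≤ lam * (D y (x n) - D y (x (n + 1)) - D (x (n + 1)) (x n))`.
For a maximizer `y`, it shows that `D y (x n)` is nonincreasing (Fejér monotonicity) and, as this
sequence converges, that `Φ (x n)` tends to the maximum. By compactness some subsequence converges
to a point `a`, which is then a maximizer; `D a (x n)` is nonincreasing and tends to `0` along that
subsequence, so it tends to `0`.
-/

/-- Three-point inequality for a proximal step: `p` maximizes `Φ - lam * ‖· - q‖²` over `X`. -/
lemma imm_three_point {N : ℕ} {X : Set (Fin N → ℝ)} {Φ : (Fin N → ℝ) → ℝ}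
    (hconc : ConcaveOn ℝ X Φ) {lam : ℝ} (hlam : 0 < lam) {p q : Fin N → ℝ} (hp : p ∈ X)
    (hmax : ∀ y ∈ X, Φ y - lam * ∑ j, (y j - q j) ^ 2 ≤ Φ p - lam * ∑ j, (p j - q j) ^ 2)
    {y : Fin N → ℝ} (hy : y ∈ X) :
    Φ y - Φ p ≤ lam * (∑ j, (y j - q j) ^ 2 - ∑ j, (y j - p j) ^ 2
      - ∑ j, (p j - q j) ^ 2) := by
  set A := ∑ j, (y j - q j) ^ 2 with hA
  set B := ∑ j, (y j - p j) ^ 2 with hB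
  set C := ∑ j, (p j - q j) ^ 2 with hC
  have hB0 : 0 ≤ B := Finset.sum_nonneg fun j _ => sq_nonneg _
  -- Optimality of `p` against the point at parameter `t` of the segment from `p` to `y`.
  have key : ∀ t : ℝ, 0 < t → t ≤ 1 → Φ y - Φ p ≤ lam * (A - B - C) + t * (lam * B) := by
    intro t ht ht1
    have hz := hconc.1 hp hy (sub_nonneg.2 ht1) ht.le (by ring)
    have h1 := hconc.2 hp hy (sub_nonneg.2 ht1) ht.le (by ring)
    have h2 := hmax _ hz
    have h3 : ∑ j, (((1 - t) • p + t • y) j - q j) ^ 2 = C + t * (A - B - C) + t ^ 2 * B := by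
      rw [hA, hB, hC]
      simp only [← Finset.sum_sub_distrib, Finset.mul_sum, ← Finset.sum_add_distrib]
      refine Finset.sum_congr rfl fun j _ => ?_
      simp only [Pi.add_apply, Pi.smul_apply, smul_eq_mul]
      ring
    rw [h3] at h2
    simp only [smul_eq_mul] at h1
    refine le_of_mul_le_mul_left ?_ ht
    linarith
  by_contra! hlt
  -- With `δ` the gap and `K = lam * B`, the choice `t = δ / (δ + K)` makes `t * K < δ`.
  set δ := Φ y - Φ p - lam * (A - B - C) with hδ
  have hδ0 : 0 < δ := by linarith
  have hK : 0 ≤ lam * B := by positivity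
  have hs : 0 < δ + lam * B := by linarith
  have h := key (δ / (δ + lam * B)) (by positivity) ((div_le_one hs).2 (by linarith))
  have h4 : δ ≤ δ * (lam * B) / (δ + lam * B) := by
    rw [← div_mul_eq_mul_div]; linarith
  rw [le_div_iff₀ hs] at h4
  nlinarith [mul_pos hδ0 hδ0]


/-- For `X ⊆ ℝ^N` nonempty, convex and compact, `Φ` continuous and concave
on `X`, `λ > 0`, and IMM iterates `x(n+1) = argmax_{y∈X} (Φ(y) − λ‖y − x(n)‖²)`
(Euclidean norm, written via sums of squares) starting from `x(0) ∈ X`, the sequence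
`(x(n))` converges to some point of `Γ = argmax_{x∈X} Φ(x)`. -/
theorem imm_converges_to_maximizer
    (N : ℕ) (X : Set (Fin N → ℝ))
    (hne : X.Nonempty) (hconv : Convex ℝ X) (hcomp : IsCompact X)
    (Φ : (Fin N → ℝ) → ℝ)
    (hcont : ContinuousOn Φ X) (hconc : ConcaveOn ℝ X Φ)
    (lam : ℝ) (hlam : 0 < lam)
    (x : ℕ → Fin N → ℝ)
    (h0 : x 0 ∈ X)
    (hiter : ∀ n : ℕ, x (n + 1) ∈ X ∧ ∀ y ∈ X,
      Φ y - lam * ∑ j, (y j - x n j) ^ 2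
        ≤ Φ (x (n + 1)) - lam * ∑ j, (x (n + 1) j - x n j) ^ 2) :
    ∃ xstar : Fin N → ℝ,
      xstar ∈ X ∧ (∀ y ∈ X, Φ y ≤ Φ xstar) ∧
      Filter.Tendsto x Filter.atTop (nhds xstar) := by
  have hxX : ∀ n, x n ∈ X := by
    intro n
    cases n with
    | zero => exact h0
    | succ k => exact (hiter k).1
  have h3 : ∀ n, ∀ y ∈ X, Φ y - Φ (x (n + 1)) ≤ lam * (∑ j, (y j - x n j) ^ 2
      - ∑ j, (y j - x (n + 1) j) ^ 2 - ∑ j, (x (n + 1) j - x n j) ^ 2) := fun n y hy =>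
    imm_three_point hconc hlam (hiter n).1 (hiter n).2 hy
  have hDnn : ∀ (y z : Fin N → ℝ), 0 ≤ ∑ j, (y j - z j) ^ 2 := fun y z =>
    Finset.sum_nonneg fun j _ => sq_nonneg _
  have hanti : ∀ g ∈ X, (∀ y ∈ X, Φ y ≤ Φ g) → Antitone fun n => ∑ j, (g j - x n j) ^ 2 := by
    intro g hg hgm
    refine antitone_nat_of_succ_le fun n => ?_
    have h1 := h3 n g hg
    have h2 := hgm _ (hxX (n + 1))
    have h4 := hDnn (x (n + 1)) (x n)
    have h5 := nonneg_of_mul_nonneg_right (le_trans (sub_nonneg.2 h2) h1) hlam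
    linarith
  obtain ⟨g, hg, hgm⟩ := hcomp.exists_isMaxOn hne hcont
  replace hgm : ∀ y ∈ X, Φ y ≤ Φ g := fun y hy => hgm hy
  have hDlim := tendsto_atTop_ciInf (hanti g hg hgm) ⟨0, by rintro _ ⟨n, rfl⟩; exact hDnn _ _⟩
  have hΦ : Filter.Tendsto (fun n => Φ (x n)) Filter.atTop (nhds (Φ g)) := by
    rw [← Filter.tendsto_add_atTop_iff_nat 1]
    have hlow := ((hDlim.sub ((Filter.tendsto_add_atTop_iff_nat 1).2 hDlim)).const_mul
      lam).const_sub (Φ g)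
    rw [sub_self, mul_zero, sub_zero] at hlow
    refine tendsto_of_tendsto_of_tendsto_of_le_of_le hlow tendsto_const_nhds
      (fun n => ?_) (fun n => hgm _ (hxX (n + 1)))
    have h1 := h3 n g hg
    have h4 := mul_nonneg hlam.le (hDnn (x (n + 1)) (x n))
    dsimp only
    linarith
  obtain ⟨a, ha, φ, hφ, hlim⟩ := hcomp.tendsto_subseq hxX
  have hΦa : Φ a = Φ g := by
    refine tendsto_nhds_unique ((hcont a ha).tendsto.comp
      (tendsto_nhdsWithin_iff.2 ⟨hlim, Filter.Eventually.of_forall fun n => hxX _⟩)) ?_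
    exact hΦ.comp hφ.tendsto_atTop
  have ham : ∀ y ∈ X, Φ y ≤ Φ a := fun y hy => hΦa ▸ hgm y hy
  refine ⟨a, ha, ham, ?_⟩
  have hDa := tendsto_atTop_ciInf (hanti a ha ham) ⟨0, by rintro _ ⟨n, rfl⟩; exact hDnn _ _⟩
  have hsub : Filter.Tendsto (fun n => ∑ j, (a j - x (φ n) j) ^ 2) Filter.atTop (nhds 0) := by
    have hc : Continuous fun z : Fin N → ℝ => ∑ j, (a j - z j) ^ 2 := by fun_prop
    have h := (hc.tendsto a).comp hlim
    simpa [Function.comp_def] using h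
  rw [tendsto_nhds_unique (hDa.comp hφ.tendsto_atTop) hsub] at hDa
  rw [tendsto_pi_nhds]
  intro j
  have hsq : Filter.Tendsto (fun n => (a j - x n j) ^ 2) Filter.atTop (nhds 0) :=
    squeeze_zero (fun n => sq_nonneg _) (fun n => Finset.single_le_sum
      (f := fun j => (a j - x n j) ^ 2) (fun i _ => sq_nonneg _) (Finset.mem_univ j)) hDa
  have habs := hsq.sqrt
  simp only [Real.sqrt_sq_eq_abs, Real.sqrt_zero] at habs
  have h := ((tendsto_zero_iff_abs_tendsto_zero _).2 habs).const_sub (a j)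
  simpa using h
end

section
/- Let each X_i ⊆ ℝ be nonempty, convex and compact, let G and every f_i be continuous with the potential Φ concave on X, let λ > 0, let x* be a maximizer of Φ over X, and let the IMM iterates be x(n+1) = argmax_{x∈X} (Φ(x) − λ‖x − x(n)‖²) from x(0) ∈ X. Then for every n ≥ 1, x(n) is an ε(n)-Nash equilibrium of the game with utilities J_i, where ε(n) = a_max · λ‖x(0) − x*‖²/(2n) and a_max = max_i a_i; in particular ε(n) → 0 as n → ∞. -/
/-!
The game is a weighted potential game: a unilateral deviation changes `J i` by `a i` times the change
of `Φ`, so it is enough to show `Φ xstar - Φ (x n) ≤ lam * ‖x 0 - xstar‖² / (2 * n)`.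

IMM is the proximal point method, and this is its sharp rate: the usual telescoping argument loses
a factor of two. Put `F k = (Φ xstar - Φ (x k)) / (2 * lam)` and `g = x k - x (k + 1)`. Optimality
of `x (k + 1)` and concavity say that `g` is a subgradient of `-Φ / (2 * lam)` at `x (k + 1)`
(`prox_variational`). Testing it at `xstar` and at `x k` gives
`F (k + 1) ≤ ⟪g, x (k + 1) - xstar⟫` and `F (k + 1) + ‖g‖² ≤ F k`.

For a horizon `n`, these are combined with the weights `k / (2 * n - k)`: for every `1 ≤ k ≤ n` there
is a vector `w`, a weighted sum of the subgradients so far, such that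
`k / (2 * n - k) * F k ≤ ⟪x 0 - xstar, w⟫ - n * ‖w‖² - (n - k) / k² * ‖x 0 - x k - 2 * n * w‖²`
(`prox_certificate`). The defect of each induction step is a perfect square (`scalar_step`). At
`k = n` the last term vanishes, and `⟪x 0 - xstar, w⟫ - n * ‖w‖² ≤ ‖x 0 - xstar‖² / (4 * n)`
finishes the proof (`prox_rate`).
-/

/-- One coordinate of the induction step of `prox_certificate`. Here `S`, `w`, `g` stand for the
coordinates of `x 0 - x k`, of the multiplier vector and of `x k - x (k + 1)`; the weight of `g` is
the increment `(k + 1) / (2 * n - k - 1) - k / (2 * n - k)`. -/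
lemma scalar_step (n k S w g : ℝ) (hk : 1 ≤ k) (hn : k + 1 ≤ n) :
    n * (w + 2 * n / ((2 * n - k) * (2 * n - k - 1)) * g) ^ 2
      + (n - (k + 1)) / (k + 1) ^ 2
        * (S + g - 2 * n * (w + 2 * n / ((2 * n - k) * (2 * n - k - 1)) * g)) ^ 2
    ≤ k / (2 * n - k) * g ^ 2 + 2 * n / ((2 * n - k) * (2 * n - k - 1)) * (g * (S + g))
      + n * w ^ 2 + (n - k) / k ^ 2 * (S - 2 * n * w) ^ 2 := by
  have hm : 0 < 2 * n - k := by linarith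
  have hm1 : 0 < 2 * n - k - 1 := by linarith
  have hk0 : 0 < k := by linarith
  have hk1 : 0 < k + 1 := by linarith
  -- The difference of the two sides is `C * (g + (2 * n - k) / k² * (S - 2 * n * w))²`.
  obtain ⟨C, hC⟩ : ∃ C : ℝ, C = k ^ 2 / (2 * (2 * n - k)) *
      (2 * n / ((2 * n - k) * (2 * n - k - 1)) + 2 * ((n - (k + 1)) / (k + 1) ^ 2) *
        ((4 * n ^ 2 - (2 * n - k) * (2 * n - k - 1)) / ((2 * n - k) * (2 * n - k - 1)))) :=
    ⟨_, rfl⟩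
  have hC0 : 0 ≤ C := by
    have h1 : 0 ≤ n - (k + 1) := by linarith
    have h2 : 0 ≤ 4 * n ^ 2 - (2 * n - k) * (2 * n - k - 1) := by nlinarith
    have h3 : 0 ≤ n := by linarith
    rw [hC]
    positivity
  have hsq := mul_nonneg hC0 (sq_nonneg (g + (2 * n - k) / k ^ 2 * (S - 2 * n * w)))
  rw [← sub_nonneg]
  refine hsq.trans_eq ?_
  rw [hC]
  field_simp
  ring

/-- The potential inequality behind the sharp rate, for horizon `n`. -/
lemma prox_certificate {ι : Type*} [Fintype ι] (x : ℕ → ι → ℝ) (s : ι → ℝ) (F : ℕ → ℝ)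
    (hA : ∀ k, F (k + 1) ≤ ∑ j, (x k j - x (k + 1) j) * (x (k + 1) j - s j))
    (hB : ∀ k, F (k + 1) + ∑ j, (x k j - x (k + 1) j) ^ 2 ≤ F k)
    (n k : ℕ) (hk : 1 ≤ k) (hkn : k ≤ n) :
    ∃ w : ι → ℝ, (k : ℝ) / (2 * n - k) * F k ≤
      ∑ j, ((x 0 j - s j) * w j - n * w j ^ 2
        - ((n : ℝ) - k) / (k : ℝ) ^ 2 * (x 0 j - x k j - 2 * n * w j) ^ 2) := by
  induction k, hk using Nat.le_induction with
  | base =>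
    have hn : (1 : ℝ) ≤ n := by exact_mod_cast hkn
    have hd : 0 < 2 * (n : ℝ) - 1 := by linarith
    refine ⟨fun j => 1 / (2 * n - 1) * (x 0 j - x 1 j), ?_⟩
    push_cast
    refine (mul_le_mul_of_nonneg_left (hA 0) (by positivity)).trans_eq ?_
    rw [Finset.mul_sum]
    refine Finset.sum_congr rfl fun j _ => ?_
    simp only [zero_add]
    field_simp
    ring
  | succ k hk ih =>
    obtain ⟨w, hw⟩ := ih (by omega)
    have hk1 : (1 : ℝ) ≤ k := by exact_mod_cast hk
    have hn : (k : ℝ) + 1 ≤ n := by exact_mod_cast hkn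
    have hm : 0 < 2 * (n : ℝ) - k := by linarith
    have hm1 : 0 < 2 * (n : ℝ) - k - 1 := by linarith
    obtain ⟨μ, hμ⟩ : ∃ μ : ℝ, μ = 2 * n / ((2 * n - k) * (2 * n - k - 1)) := ⟨_, rfl⟩
    have hμ0 : 0 ≤ μ := by rw [hμ]; positivity
    refine ⟨fun j => w j + μ * (x k j - x (k + 1) j), ?_⟩
    have hsplit : ((k + 1 : ℕ) : ℝ) / (2 * n - (k + 1 : ℕ)) = k / (2 * n - k) + μ := by
      have : (2 * (n : ℝ) - (k + 1)) ≠ 0 := by linarith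
      rw [hμ]
      push_cast
      field_simp
      ring
    have hb := mul_le_mul_of_nonneg_left (hB k)
      (show 0 ≤ (k : ℝ) / (2 * n - k) by positivity)
    have ha := mul_le_mul_of_nonneg_left (hA k) hμ0
    have hsum : ∑ j, ((x 0 j - s j) * w j - n * w j ^ 2
          - ((n : ℝ) - k) / (k : ℝ) ^ 2 * (x 0 j - x k j - 2 * n * w j) ^ 2)
        - k / (2 * n - k) * ∑ j, (x k j - x (k + 1) j) ^ 2
        + μ * ∑ j, (x k j - x (k + 1) j) * (x (k + 1) j - s j)
        ≤ ∑ j, ((x 0 j - s j) * (w j + μ * (x k j - x (k + 1) j))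
          - n * (w j + μ * (x k j - x (k + 1) j)) ^ 2
          - ((n : ℝ) - (k + 1 : ℕ)) / ((k + 1 : ℕ) : ℝ) ^ 2
            * (x 0 j - x (k + 1) j - 2 * n * (w j + μ * (x k j - x (k + 1) j))) ^ 2) := by
      rw [Finset.mul_sum, Finset.mul_sum, ← Finset.sum_sub_distrib, ← Finset.sum_add_distrib]
      refine Finset.sum_le_sum fun j _ => ?_
      have h := scalar_step n k (x 0 j - x k j) (w j) (x k j - x (k + 1) j) hk1 hn
      rw [← hμ] at h
      have e : x 0 j - x k j + (x k j - x (k + 1) j) = x 0 j - x (k + 1) j := by ring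
      rw [e] at h
      push_cast
      linear_combination h
    rw [hsplit]
    linarith

/-- The sharp rate of the proximal point method with unit step, for `F` the optimality gap and `s` a
minimizer. -/
lemma prox_rate_s15 {ι : Type*} [Fintype ι] (x : ℕ → ι → ℝ) (s : ι → ℝ) (F : ℕ → ℝ)
    (hA : ∀ k, F (k + 1) ≤ ∑ j, (x k j - x (k + 1) j) * (x (k + 1) j - s j))
    (hB : ∀ k, F (k + 1) + ∑ j, (x k j - x (k + 1) j) ^ 2 ≤ F k)
    (n : ℕ) (hn : 1 ≤ n) :
    F n ≤ (∑ j, (x 0 j - s j) ^ 2) / (4 * n) := by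
  obtain ⟨w, hw⟩ := prox_certificate x s F hA hB n n hn le_rfl
  have hn0 : (0 : ℝ) < n := by exact_mod_cast hn
  have h1 : (n : ℝ) / (2 * n - n) = 1 := by
    rw [show 2 * (n : ℝ) - n = n by ring]
    exact div_self hn0.ne'
  rw [h1, one_mul] at hw
  refine hw.trans ?_
  rw [Finset.sum_div]
  refine Finset.sum_le_sum fun j _ => ?_
  rw [le_div_iff₀ (by positivity)]
  simp only [sub_self, zero_div, zero_mul, sub_zero]
  linear_combination sq_nonneg (x 0 j - s j - 2 * n * w j)

/-- First-order optimality of a proximal step: if `p` maximizes `Φ - lam * ‖· - c‖²` over the domain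
of concavity `D`, then `2 * lam * (p - c)` is a supergradient of `Φ` at `p`. -/
lemma prox_variational {ι : Type*} [Fintype ι] {D : Set (ι → ℝ)} {Φ : (ι → ℝ) → ℝ}
    (hconc : ConcaveOn ℝ D Φ) (lam : ℝ) (c p : ι → ℝ) (hp : p ∈ D)
    (hmax : ∀ y ∈ D, Φ y - lam * ∑ j, (y j - c j) ^ 2 ≤ Φ p - lam * ∑ j, (p j - c j) ^ 2)
    (y : ι → ℝ) (hy : y ∈ D) :
    Φ y - Φ p ≤ 2 * lam * ∑ j, (p j - c j) * (y j - p j) := by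
  -- Compare `p` with `(1 - θ) p + θ y`, divide by `θ` and let `θ` tend to `0`.
  have key : ∀ θ ∈ Set.Ioo (0 : ℝ) 1, Φ y - Φ p ≤
      2 * lam * ∑ j, (p j - c j) * (y j - p j) + θ * (lam * ∑ j, (y j - p j) ^ 2) := by
    rintro θ ⟨h0, h1⟩
    have hz := hconc.1 hp hy (sub_nonneg.2 h1.le) h0.le (by ring)
    have hc := hconc.2 hp hy (sub_nonneg.2 h1.le) h0.le (by ring)
    have hm := hmax _ hz
    have hexp : ∑ j, (((1 - θ) • p + θ • y) j - c j) ^ 2 = ∑ j, (p j - c j) ^ 2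
        + 2 * θ * ∑ j, (p j - c j) * (y j - p j) + θ ^ 2 * ∑ j, (y j - p j) ^ 2 := by
      rw [Finset.mul_sum, Finset.mul_sum, ← Finset.sum_add_distrib, ← Finset.sum_add_distrib]
      refine Finset.sum_congr rfl fun j _ => ?_
      simp only [Pi.add_apply, Pi.smul_apply, smul_eq_mul]
      ring
    rw [hexp] at hm
    simp only [smul_eq_mul] at hc
    refine le_of_mul_le_mul_left ?_ h0
    linear_combination hc + hm
  have hlim : Filter.Tendsto (fun θ : ℝ => 2 * lam * ∑ j, (p j - c j) * (y j - p j)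
      + θ * (lam * ∑ j, (y j - p j) ^ 2)) (nhdsWithin 0 (Set.Ioi 0))
      (nhds (2 * lam * ∑ j, (p j - c j) * (y j - p j))) := by
    refine Filter.Tendsto.mono_left ?_ nhdsWithin_le_nhds
    refine Continuous.tendsto' (by fun_prop) _ _ (by simp)
  refine ge_of_tendsto hlim ?_
  filter_upwards [Ioo_mem_nhdsGT (zero_lt_one' ℝ)] with θ hθ using key θ hθ


/-- With each `X i` nonempty, convex and compact, `G` and every `f i`
continuous, the potential `Φ` concave on `X = X_1 × ⋯ × X_N`, `λ > 0`, `x*` a maximizer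
of `Φ` over `X`, and IMM iterates `x(n+1) = argmax_{y∈X} (Φ(y) − λ‖y − x(n)‖²)`
(Euclidean norm via sums of squares) from `x(0) ∈ X`: for every `n ≥ 1`, `x(n)` is an
`ε(n)`-Nash equilibrium with `ε(n) = a_max · λ‖x(0) − x*‖²/(2n)` and `a_max = max_i a_i`;
in particular `ε(n) → 0` as `n → ∞`. -/
theorem imm_iterates_are_eps_nash
    (N : ℕ) (X : Fin N → Set ℝ)
    (hne : ∀ i, (X i).Nonempty) (hconv : ∀ i, Convex ℝ (X i))
    (hcomp : ∀ i, IsCompact (X i))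
    (a : Fin N → ℝ) (ha : ∀ i, 0 < a i)
    (amax : ℝ) (hamax : IsGreatest (Set.range a) amax)
    (G : (Fin N → ℝ) → ℝ) (hG : Continuous G)
    (f : Fin N → ℝ → ℝ) (hf : ∀ i, Continuous (f i))
    (J : Fin N → (Fin N → ℝ) → ℝ) (Φ : (Fin N → ℝ) → ℝ)
    (hJ : ∀ i x, J i x = a i * G x + f i (x i))
    (hΦ : ∀ x, Φ x = G x + ∑ j, (1 / a j) * f j (x j))
    (hconc : ConcaveOn ℝ (Set.univ.pi X) Φ)
    (lam : ℝ) (hlam : 0 < lam)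
    (xstar : Fin N → ℝ) (hxstarX : xstar ∈ Set.univ.pi X)
    (hxstarmax : ∀ y ∈ Set.univ.pi X, Φ y ≤ Φ xstar)
    (x : ℕ → Fin N → ℝ)
    (h0 : x 0 ∈ Set.univ.pi X)
    (hiter : ∀ n : ℕ, x (n + 1) ∈ Set.univ.pi X ∧ ∀ y ∈ Set.univ.pi X,
      Φ y - lam * ∑ j, (y j - x n j) ^ 2
        ≤ Φ (x (n + 1)) - lam * ∑ j, (x (n + 1) j - x n j) ^ 2) :
    (∀ n : ℕ, 1 ≤ n → ∀ i : Fin N, ∀ t ∈ X i,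
      J i (Function.update (x n) i t)
          - amax * (lam * (∑ j, (x 0 j - xstar j) ^ 2) / (2 * (n : ℝ)))
        ≤ J i (x n)) ∧
    Filter.Tendsto
      (fun n : ℕ => amax * (lam * (∑ j, (x 0 j - xstar j) ^ 2) / (2 * (n : ℝ))))
      Filter.atTop (nhds 0) := by
  have hxX : ∀ n, x n ∈ Set.univ.pi X := by
    rintro (_ | n)
    exacts [h0, (hiter n).1]
  have hrate : ∀ n : ℕ, 1 ≤ n →
      Φ xstar - Φ (x n) ≤ lam * (∑ j, (x 0 j - xstar j) ^ 2) / (2 * (n : ℝ)) := by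
    intro n hn
    have hvar := fun k y hy =>
      prox_variational hconc lam (x k) (x (k + 1)) (hxX _) (hiter k).2 y hy
    have h := prox_rate_s15 x xstar (fun k => (Φ xstar - Φ (x k)) / (2 * lam))
      (fun k => by
        rw [div_le_iff₀ (by positivity)]
        refine (hvar k xstar hxstarX).trans_eq ?_
        rw [mul_comm]
        congr 1
        exact Finset.sum_congr rfl fun j _ => by ring)
      (fun k => by
        have hv := hvar k (x k) (hxX k)
        have e : ∑ j, (x (k + 1) j - x k j) * (x k j - x (k + 1) j)
            = -∑ j, (x k j - x (k + 1) j) ^ 2 := by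
          rw [← Finset.sum_neg_distrib]
          exact Finset.sum_congr rfl fun j _ => by ring
        rw [e] at hv
        rw [← le_sub_iff_add_le', ← sub_div, le_div_iff₀ (by positivity)]
        linear_combination hv) n hn
    have hn0 : (0 : ℝ) < n := by exact_mod_cast hn
    rw [div_le_iff₀ (by positivity)] at h
    refine h.trans_eq ?_
    field_simp
    ring
  refine ⟨fun n hn i t ht => ?_, ?_⟩
  · have hup : Function.update (x n) i t ∈ Set.univ.pi X := by
      intro j _
      rcases eq_or_ne j i with rfl | hj
      · simpa using ht
      · simpa [hj] using hxX n j trivial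
    -- The weighted potential identity for the deviation of player `i` to `t`.
    have hpot : J i (Function.update (x n) i t) - J i (x n)
        = a i * (Φ (Function.update (x n) i t) - Φ (x n)) := by
      have hsum : ∑ j, (1 / a j) * f j (Function.update (x n) i t j)
          - ∑ j, (1 / a j) * f j (x n j) = (1 / a i) * (f i t - f i (x n i)) := by
        rw [← Finset.sum_sub_distrib, Finset.sum_eq_single i]
        · rw [Function.update_self]
          ring
        · intro j _ hj
          rw [Function.update_of_ne hj, sub_self]
        · simp
      have hai := (ha i).ne'
      have hmul : a i * ((1 / a i) * (f i t - f i (x n i))) = f i t - f i (x n i) := by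
        field_simp
      rw [hJ, hJ, hΦ, hΦ, Function.update_self]
      linear_combination -a i * hsum - hmul
    have hgap : Φ (Function.update (x n) i t) - Φ (x n)
        ≤ lam * (∑ j, (x 0 j - xstar j) ^ 2) / (2 * (n : ℝ)) := by
      linarith [hxstarmax _ hup, hrate n hn]
    have hle := mul_le_mul_of_nonneg_left hgap (ha i).le
    have hle' : a i * (lam * (∑ j, (x 0 j - xstar j) ^ 2) / (2 * (n : ℝ)))
        ≤ amax * (lam * (∑ j, (x 0 j - xstar j) ^ 2) / (2 * (n : ℝ))) :=
      mul_le_mul_of_nonneg_right (hamax.2 ⟨i, rfl⟩) (by positivity)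
    linarith
  · have h := tendsto_const_div_atTop_nhds_zero_nat
      (amax * (lam * (∑ j, (x 0 j - xstar j) ^ 2) / 2))
    refine h.congr fun n => ?_
    rw [← div_div, mul_div_assoc]
end
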